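/- For all integers k ≥ ℓ ≥ 0, all α, β ∈ ℤ, and every integer n with 0 ≤ n < k−ℓ, one has ⟨P_{k,ℓ}^{(α,β)}(z), z^n⟩_C = 0, where ⟨f,g⟩_C = Σ_{i≥0} c_{α−β+i} · (coefficient of z^i in f·g). That is, P_{k,ℓ}^{(α,β)} satisfies the first family of orthogonality conditions of a type II multiple orthogonal polynomial. -/

import Mathlib

/-!
Expanded along its last column, the determinant `P` is a combination of `1, z, …, z^k` whose
coefficients, the cofactors, are constants. Applying a linear functional to `P` therefore amounts
to applying it to the entries of that column. The functional `⟨·, z^n⟩_C` sends `z^i` to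
`c_{α−β+n+i}`, which for `n < k − ℓ` is already the column of index `ℓ + n`, so the resulting
determinant has two equal columns.
-/

/-- The `ĜL₃` determinantal polynomial `P_{k,ℓ}^{(α,β)}(z)`: `(−1)^{ℓ(ℓ+1)/2}` times the
determinant of the `(k+1) × (k+1)` matrix whose `(i,j)` entry is `d_{α+i+j}` for
`0 ≤ j ≤ ℓ-1`, `c_{α−β+i+j−ℓ}` for `ℓ ≤ j ≤ k-1`, and `z^i` for `j = k`. -/
noncomputable def P3 (c d : ℤ → ℂ) (k ℓ : ℕ) (α β : ℤ) : Polynomial ℂ :=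
  (-1 : Polynomial ℂ) ^ (ℓ * (ℓ + 1) / 2) *
    Matrix.det (Matrix.of fun i j : Fin (k + 1) =>
      if (j : ℕ) < ℓ then Polynomial.C (d (α + (i : ℕ) + (j : ℕ)))
      else if (j : ℕ) < k then Polynomial.C (c (α - β + (i : ℕ) + (j : ℕ) - (ℓ : ℤ)))
      else Polynomial.X ^ (i : ℕ))

/-- The moment bilinear form `⟨f,g⟩_C = Σ_{i ≥ 0} c_{α−β+i} ⬝ (coefficient of z^i in f⬝g)`,
a finite sum. -/
noncomputable def momentFormC (c : ℤ → ℂ) (α β : ℤ) (f g : Polynomial ℂ) : ℂ :=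
  ∑ i ∈ (f * g).support, c (α - β + (i : ℤ)) * (f * g).coeff i

section Determinants

variable {R S ι : Type*} [CommRing R] [CommRing S] [Algebra R S] [Fintype ι] [DecidableEq ι]

theorem linearMap_det_updateCol_map_algebraMap (L : S →ₗ[R] R) (A : Matrix ι ι R) (j : ι)
    (v : ι → S) :
    L ((A.map (algebraMap R S)).updateCol j v).det = (A.updateCol j (L ∘ v)).det := by
  have adjugate_map : (A.map (algebraMap R S)).adjugate = A.adjugate.map (algebraMap R S) :=
    ((algebraMap R S).map_adjugate A).symm
  simp only [← Matrix.cramer_apply, Matrix.cramer_eq_adjugate_mulVec, adjugate_map,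
    Matrix.mulVec, dotProduct, Matrix.map_apply, ← Algebra.smul_def, map_sum, map_smul,
    smul_eq_mul, Function.comp_apply]

theorem linearMap_det_updateCol_eq_zero (L : S →ₗ[R] R) (A : Matrix ι ι R) {j j' : ι}
    (hj : j' ≠ j) (v : ι → S) (hv : ∀ i, L (v i) = A i j') :
    L ((A.map (algebraMap R S)).updateCol j v).det = 0 := by
  rw [linearMap_det_updateCol_map_algebraMap, show L ∘ v = fun i => A i j' from funext hv]
  exact Matrix.det_updateCol_eq_zero hj

end Determinants

section Moments

variable {R : Type*} [CommSemiring R]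

/-- The linear functional on polynomials with moments `s`, sending `X ^ i` to `s i`. -/
noncomputable def momentFunctional (s : ℕ → R) : Polynomial R →ₗ[R] R :=
  Polynomial.lsum fun i => s i • LinearMap.id

theorem momentFunctional_apply (s : ℕ → R) (f : Polynomial R) :
    momentFunctional s f = ∑ i ∈ f.support, s i * f.coeff i := by
  simp [momentFunctional, Polynomial.lsum_apply, Polynomial.sum_def]

theorem momentFunctional_X_pow (s : ℕ → R) (i : ℕ) :
    momentFunctional s (Polynomial.X ^ i) = s i := by
  simp [momentFunctional, Polynomial.lsum_apply, Polynomial.X_pow_eq_monomial,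
    Polynomial.sum_monomial_index]

end Moments

section MixedHankel

variable {R : Type*}

/-- The square matrix of size `N` formed by `ℓ` columns of the Hankel matrix of `a`, followed by
the leading columns of the Hankel matrix of `b`: the moment matrix of a type II multiple
orthogonality problem. Indices start at `0`. -/
def mixedHankel (a b : ℕ → R) (ℓ N : ℕ) : Matrix (Fin N) (Fin N) R :=
  Matrix.of fun i j => if (j : ℕ) < ℓ then a (i + j) else b (i + (j - ℓ))

theorem mixedHankel_apply_add (a b : ℕ → R) {ℓ N n : ℕ} (hn : ℓ + n < N)
    (i : Fin N) : mixedHankel a b ℓ N i ⟨ℓ + n, hn⟩ = b (i + n) := by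
  simp [mixedHankel]

theorem momentFunctional_det_mixedHankel_mul_X_pow [CommRing R] (a b : ℕ → R)
    {k ℓ n : ℕ} (hn : ℓ + n < k) :
    momentFunctional b
      ((((mixedHankel a b ℓ (k + 1)).map Polynomial.C).updateCol (Fin.last k)
        fun i => Polynomial.X ^ (i : ℕ)).det * Polynomial.X ^ n) = 0 := by
  have col_ne_last : (⟨ℓ + n, by omega⟩ : Fin (k + 1)) ≠ Fin.last k :=
    Fin.ne_of_val_ne hn.ne
  refine linearMap_det_updateCol_eq_zero
    (momentFunctional b ∘ₗ LinearMap.mulRight R (Polynomial.X ^ n)) _ col_ne_last _ fun i => ?_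
  rw [LinearMap.comp_apply, LinearMap.mulRight_apply, ← pow_add, momentFunctional_X_pow,
    mixedHankel_apply_add]

end MixedHankel

theorem momentFormC_eq_momentFunctional (c : ℤ → ℂ) (α β : ℤ) (f g : Polynomial ℂ) :
    momentFormC c α β f g = momentFunctional (fun i => c (α - β + (i : ℤ))) (f * g) :=
  (momentFunctional_apply _ _).symm

theorem P3_eq_smul_det_mixedHankel (c d : ℤ → ℂ) {k ℓ : ℕ} (hℓk : ℓ ≤ k) (α β : ℤ) :
    P3 c d k ℓ α β = (-1 : ℂ) ^ (ℓ * (ℓ + 1) / 2) •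
      (((mixedHankel (fun m => d (α + (m : ℤ))) (fun m => c (α - β + (m : ℤ))) ℓ (k + 1)).map
        Polynomial.C).updateCol (Fin.last k) fun i => Polynomial.X ^ (i : ℕ)).det := by
  rw [P3, Polynomial.smul_eq_C_mul, map_pow, map_neg, map_one]
  congr 2
  ext1 i j
  cases j using Fin.lastCases with
  | last => simp [hℓk.not_gt]
  | cast j =>
    rcases lt_or_ge (j : ℕ) ℓ with hj | hj
    · simp [mixedHankel, hj, (Fin.castSucc_lt_last j).ne, add_assoc]
    · simp [mixedHankel, hj.not_gt, (Fin.castSucc_lt_last j).ne, Nat.cast_sub hj, add_assoc,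
        add_sub_assoc]

theorem P3_orthogonality_C (c d : ℤ → ℂ) (k ℓ : ℕ) (hℓk : ℓ ≤ k) (α β : ℤ)
    (n : ℕ) (hn : n < k - ℓ) :
    momentFormC c α β (P3 c d k ℓ α β) (Polynomial.X ^ n) = 0 := by
  rw [momentFormC_eq_momentFunctional, P3_eq_smul_det_mixedHankel c d hℓk, smul_mul_assoc,
    map_smul, momentFunctional_det_mixedHankel_mul_X_pow _ _ (Nat.add_lt_of_lt_sub' hn), smul_zero]
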